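/- Let d ≥ 1 and let F₁, F₂ be probability distributions on ℝ^d with finite first moments, i.e. E‖X‖ < ∞ for X ∼ F₁ and E‖Y‖ < ∞ for Y ∼ F₂. Let X₁, X₂ be i.i.d. F₁ and Y₁, Y₂ be i.i.d. F₂, all four mutually independent, and define D(F₁,F₂) = (E‖X₁−Y₁‖ − E‖X₁−X₂‖)² + (E‖X₁−Y₁‖ − E‖Y₁−Y₂‖)². Then D(F₁,F₂) = 0 if and only if F₁ = F₂. -/

import Mathlib

open MeasureTheory

/-!
On the line, `|x - y| = ∫ (1_{x ≤ t} - 1_{y ≤ t})² dt`, so Fubini turns the energy distance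
`2 E‖X - Y‖ - E‖X - X'‖ - E‖Y - Y'‖` into `2 ∫ (F(t) - G(t))² dt`, where `F` and `G` are the
distribution functions; hence it is nonnegative, and zero only for equal laws. In a Euclidean
space a standard Gaussian vector `g` satisfies `E|⟪g, x⟫| = c ‖x‖`, so `c` times the energy distance
is the average over `g` of the energy distances of the projections of the two laws along `g`. If it
vanishes, the projections agree for almost every `g`, so the characteristic functions agree almost
everywhere, hence everywhere by continuity. When the divergence vanishes, so does the energy
distance, which is the sum of the two differences that the divergence squares.
-/

open ProbabilityTheory Set Filter Topology

section Integrals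

variable {α β : Type*} [MeasurableSpace α] [MeasurableSpace β]

lemma integral_two_mul_sub_sub {μ : Measure α} {f g h : α → ℝ} (hf : Integrable f μ)
    (hg : Integrable g μ) (hh : Integrable h μ) :
    ∫ x, (2 * f x - g x - h x) ∂μ = 2 * ∫ x, f x ∂μ - ∫ x, g x ∂μ - ∫ x, h x ∂μ := by
  have h_diff : Integrable (fun x ↦ 2 * f x - g x) μ := (hf.const_mul 2).sub hg
  rw [integral_sub h_diff hh, integral_sub (hf.const_mul 2) hg, integral_const_mul]

lemma integrable_prod_of_nonneg {μ : Measure α} {ν : Measure β} [SFinite ν] {f : α × β → ℝ}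
    (hf : AEStronglyMeasurable f (μ.prod ν)) (hf_nonneg : 0 ≤ f)
    (h_section : ∀ x, Integrable (fun y ↦ f (x, y)) ν)
    (h_integral : Integrable (fun x ↦ ∫ y, f (x, y) ∂ν) μ) : Integrable f (μ.prod ν) := by
  refine (integrable_prod_iff hf).2 ⟨ae_of_all _ h_section, ?_⟩
  simpa only [Real.norm_of_nonneg (hf_nonneg _)] using h_integral

lemma integral_prod_sq_indicator_sub (μ ν : Measure α) [IsProbabilityMeasure μ]
    [IsProbabilityMeasure ν] {s : Set α} (hs : MeasurableSet s) :
    ∫ p, (s.indicator 1 p.1 - s.indicator 1 p.2 : ℝ) ^ 2 ∂μ.prod ν =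
      μ.real s + ν.real s - 2 * (μ.real s * ν.real s) := by
  have h_idem (x : α) : (s.indicator 1 x : ℝ) ^ 2 = s.indicator 1 x := by
    by_cases hx : x ∈ s <;> simp [hx]
  have h_sq (p : α × α) : (s.indicator 1 p.1 - s.indicator 1 p.2 : ℝ) ^ 2 =
      s.indicator 1 p.1 + s.indicator 1 p.2 - 2 * (s.indicator 1 p.1 * s.indicator 1 p.2) := by
    linear_combination h_idem p.1 + h_idem p.2
  have h_int (μ : Measure α) [IsProbabilityMeasure μ] :
      Integrable (s.indicator (1 : α → ℝ)) μ := (integrable_const 1).indicator hs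
  have h_fst := (h_int μ).comp_fst ν
  have h_snd := (h_int ν).comp_snd μ
  simp_rw [h_sq]
  rw [integral_sub (h_fst.fun_add h_snd) (((h_int μ).mul_prod (h_int ν)).const_mul 2),
    integral_add h_fst h_snd, integral_const_mul, integral_prod_mul,
    integral_fun_fst (s.indicator (1 : α → ℝ)), integral_fun_snd (s.indicator (1 : α → ℝ))]
  simp [integral_indicator_one hs]

end Integrals

section EnergyDistance

variable {E : Type*} [NormedAddCommGroup E] [MeasurableSpace E]

/-- The mean distance `E‖X - Y‖` of independent `X ∼ μ` and `Y ∼ ν`. -/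
noncomputable def meanDist (μ ν : Measure E) : ℝ := ∫ p, ‖p.1 - p.2‖ ∂μ.prod ν

/-- The energy distance `2 E‖X - Y‖ - E‖X - X'‖ - E‖Y - Y'‖` of `μ` and `ν` (not its square root,
which some authors call by this name). -/
noncomputable def energyDist (μ ν : Measure E) : ℝ :=
  2 * meanDist μ ν - meanDist μ μ - meanDist ν ν

lemma integrable_norm_sub_prod [OpensMeasurableSpace E] [SecondCountableTopology E]
    {μ ν : Measure E} [IsFiniteMeasure μ] [IsFiniteMeasure ν]
    (hμ : Integrable (fun x ↦ ‖x‖) μ) (hν : Integrable (fun x ↦ ‖x‖) ν) :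
    Integrable (fun p : E × E ↦ ‖p.1 - p.2‖) (μ.prod ν) := by
  refine ((hμ.comp_fst ν).add (hν.comp_snd μ)).mono' (by fun_prop) (ae_of_all _ fun p ↦ ?_)
  simpa using norm_sub_le p.1 p.2

end EnergyDistance

section Line

lemma sq_indicator_Iic_sub (x y t : ℝ) :
    ((Iic t).indicator 1 x - (Iic t).indicator 1 y : ℝ) ^ 2 =
      (Ico (min x y) (max x y)).indicator 1 t := by
  simp only [indicator, mem_Iic, mem_Ico, Pi.one_apply, min_le_iff, lt_max_iff]
  grind

lemma integral_sq_indicator_Iic_sub (x y : ℝ) :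
    ∫ t, ((Iic t).indicator 1 x - (Iic t).indicator 1 y : ℝ) ^ 2 = |x - y| := by
  simp_rw [sq_indicator_Iic_sub]
  rw [integral_indicator_one measurableSet_Ico, Real.volume_real_Ico_of_le min_le_max,
    max_sub_min_eq_abs']

lemma measurable_sq_indicator_Iic_sub :
    Measurable fun q : (ℝ × ℝ) × ℝ ↦
      ((Iic q.2).indicator 1 q.1.1 - (Iic q.2).indicator 1 q.1.2 : ℝ) ^ 2 := by
  have h_le : MeasurableSet {r : ℝ × ℝ | r.1 ≤ r.2} :=
    measurableSet_le measurable_fst measurable_snd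
  have h_ind : Measurable fun r : ℝ × ℝ ↦ ((Iic r.2).indicator 1 r.1 : ℝ) :=
    measurable_one.indicator h_le
  exact ((h_ind.comp (by fun_prop : Measurable fun q : (ℝ × ℝ) × ℝ ↦ (q.1.1, q.2))).sub
    (h_ind.comp (by fun_prop : Measurable fun q : (ℝ × ℝ) × ℝ ↦ (q.1.2, q.2)))).pow_const 2

variable {μ ν : Measure ℝ}

lemma integrable_prod_sq_indicator_Iic_sub [IsFiniteMeasure μ] [IsFiniteMeasure ν]
    (hμ : Integrable (fun x ↦ ‖x‖) μ) (hν : Integrable (fun x ↦ ‖x‖) ν) :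
    Integrable (fun q : (ℝ × ℝ) × ℝ ↦
      ((Iic q.2).indicator 1 q.1.1 - (Iic q.2).indicator 1 q.1.2 : ℝ) ^ 2)
      ((μ.prod ν).prod volume) := by
  refine integrable_prod_of_nonneg measurable_sq_indicator_Iic_sub.aestronglyMeasurable
    (fun _ ↦ sq_nonneg _) (fun p ↦ ?_) ?_
  · simp_rw [sq_indicator_Iic_sub]
    exact (integrable_indicator_iff measurableSet_Ico).2 (integrableOn_const measure_Ico_lt_top.ne)
  · simpa only [integral_sq_indicator_Iic_sub, Real.norm_eq_abs] using
      integrable_norm_sub_prod hμ hν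

variable [IsProbabilityMeasure μ] [IsProbabilityMeasure ν]

variable (μ ν) in
lemma integral_prod_sq_indicator_Iic_sub (t : ℝ) :
    ∫ p, ((Iic t).indicator 1 p.1 - (Iic t).indicator 1 p.2 : ℝ) ^ 2 ∂μ.prod ν =
      cdf μ t + cdf ν t - 2 * (cdf μ t * cdf ν t) := by
  simp only [integral_prod_sq_indicator_sub μ ν measurableSet_Iic, cdf_eq_real]

lemma integrable_cdf_add_sub_mul
    (hμ : Integrable (fun x ↦ ‖x‖) μ) (hν : Integrable (fun x ↦ ‖x‖) ν) :
    Integrable fun t ↦ cdf μ t + cdf ν t - 2 * (cdf μ t * cdf ν t) := by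
  simpa only [integral_prod_sq_indicator_Iic_sub] using
    (integrable_prod_sq_indicator_Iic_sub hμ hν).integral_prod_right

lemma meanDist_eq_integral_cdf
    (hμ : Integrable (fun x ↦ ‖x‖) μ) (hν : Integrable (fun x ↦ ‖x‖) ν) :
    meanDist μ ν = ∫ t, (cdf μ t + cdf ν t - 2 * (cdf μ t * cdf ν t)) := by
  simp_rw [meanDist, Real.norm_eq_abs, ← integral_sq_indicator_Iic_sub,
    ← integral_prod_sq_indicator_Iic_sub]
  exact integral_integral_swap (integrable_prod_sq_indicator_Iic_sub hμ hν)

lemma integrable_sq_cdf_sub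
    (hμ : Integrable (fun x ↦ ‖x‖) μ) (hν : Integrable (fun x ↦ ‖x‖) ν) :
    Integrable fun t ↦ (cdf μ t - cdf ν t) ^ 2 := by
  have h := (((integrable_cdf_add_sub_mul hμ hν).const_mul 2).sub
    (integrable_cdf_add_sub_mul hμ hμ)).sub (integrable_cdf_add_sub_mul hν hν)
  refine (h.const_mul 2⁻¹).congr (ae_of_all _ fun t ↦ ?_)
  simp only [Pi.sub_apply]
  ring

lemma energyDist_eq_two_mul_integral_sq_cdf_sub
    (hμ : Integrable (fun x ↦ ‖x‖) μ) (hν : Integrable (fun x ↦ ‖x‖) ν) :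
    energyDist μ ν = 2 * ∫ t, (cdf μ t - cdf ν t) ^ 2 := by
  rw [energyDist, meanDist_eq_integral_cdf hμ hν, meanDist_eq_integral_cdf hμ hμ,
    meanDist_eq_integral_cdf hν hν, ← integral_two_mul_sub_sub (integrable_cdf_add_sub_mul hμ hν)
      (integrable_cdf_add_sub_mul hμ hμ) (integrable_cdf_add_sub_mul hν hν), ← integral_const_mul]
  congr with t
  ring

lemma energyDist_nonneg_of_real
    (hμ : Integrable (fun x ↦ ‖x‖) μ) (hν : Integrable (fun x ↦ ‖x‖) ν) :
    0 ≤ energyDist μ ν := by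
  rw [energyDist_eq_two_mul_integral_sq_cdf_sub hμ hν]
  positivity

lemma stieltjesFunction_eq_of_dense {R : Type*} [LinearOrder R] [TopologicalSpace R]
    [OrderTopology R] [DenselyOrdered R] [NoMaxOrder R] {f g : StieltjesFunction R}
    (h : Dense {t | f t = g t}) : f = g := by
  ext t
  have h_frequently : ∃ᶠ u in 𝓝[>] t, f u = g u := by
    refine (nhdsGT_basis t).frequently_iff.2 fun b hb ↦ ?_
    obtain ⟨u, hu, htu⟩ := h.exists_between hb
    exact ⟨u, htu, hu⟩
  have h_tendsto (f : StieltjesFunction R) : Tendsto f (𝓝[>] t) (𝓝 (f t)) :=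
    (f.right_continuous t).mono Ioi_subset_Ici_self
  exact tendsto_nhds_unique_of_frequently_eq (h_tendsto f) (h_tendsto g) h_frequently

lemma eq_of_energyDist_eq_zero_of_real
    (hμ : Integrable (fun x ↦ ‖x‖) μ) (hν : Integrable (fun x ↦ ‖x‖) ν)
    (h : energyDist μ ν = 0) : μ = ν := by
  have h_integral : ∫ t, (cdf μ t - cdf ν t) ^ 2 = 0 := by
    linarith [energyDist_eq_two_mul_integral_sq_cdf_sub hμ hν]
  have h_ae := (integral_eq_zero_iff_of_nonneg (fun _ ↦ sq_nonneg _)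
    (integrable_sq_cdf_sub hμ hν)).1 h_integral
  refine Measure.eq_of_cdf μ ν
    (stieltjesFunction_eq_of_dense (Measure.dense_of_ae (μ := volume) ?_))
  filter_upwards [h_ae] with t ht
  exact sub_eq_zero.1 (pow_eq_zero_iff two_ne_zero |>.1 ht)

end Line

section Gaussian

lemma isOpenPosMeasure_gaussianReal (m : ℝ) {v : NNReal} (hv : v ≠ 0) :
    (gaussianReal m v).IsOpenPosMeasure :=
  (gaussianReal_absolutelyContinuous' m hv).isOpenPosMeasure

lemma integral_abs_gaussianReal (v : NNReal) :
    ∫ z, |z| ∂gaussianReal 0 v = √v * ∫ z, |z| ∂gaussianReal 0 1 := by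
  have h_map : gaussianReal 0 v = (gaussianReal 0 1).map (√v * ·) := by
    rw [gaussianReal_map_const_mul]
    congr 1
    · simp
    · ext; simp
  rw [h_map, integral_map (by fun_prop) (by fun_prop)]
  simp only [abs_mul, abs_of_nonneg (Real.sqrt_nonneg _), integral_const_mul]

variable {E : Type*} [NormedAddCommGroup E] [InnerProductSpace ℝ E] [FiniteDimensional ℝ E]
  [MeasurableSpace E] [BorelSpace E]

instance isOpenPosMeasure_stdGaussian : (stdGaussian E).IsOpenPosMeasure := by
  have : (gaussianReal 0 1).IsOpenPosMeasure := isOpenPosMeasure_gaussianReal 0 one_ne_zero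
  let b := stdOrthonormalBasis ℝ E
  rw [stdGaussian_eq_map_pi_orthonormalBasis b]
  refine Continuous.isOpenPosMeasure_map (by fun_prop) fun x ↦ ⟨fun i ↦ b.repr x i, ?_⟩
  exact b.sum_repr x

lemma integrable_abs_inner_stdGaussian (x : E) :
    Integrable (fun g : E ↦ |inner ℝ g x|) (stdGaussian E) :=
  (IsGaussian.integrable_id.inner_const (𝕜 := ℝ) x).abs

lemma integral_abs_inner_stdGaussian (x : E) :
    ∫ g : E, |inner ℝ g x| ∂stdGaussian E = (∫ z, |z| ∂gaussianReal 0 1) * ‖x‖ := by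
  have h_law : (stdGaussian E).map (innerSL ℝ x) = gaussianReal 0 (‖x‖ ^ 2).toNNReal := by
    rw [IsGaussian.map_eq_gaussianReal, integral_strongDual_stdGaussian,
      variance_dual_stdGaussian, innerSL_apply_norm]
  calc ∫ g : E, |inner ℝ g x| ∂stdGaussian E
      = ∫ z, |z| ∂(stdGaussian E).map (innerSL ℝ x) := by
        rw [integral_map (by fun_prop) (by fun_prop)]
        simp only [innerSL_apply_apply, real_inner_comm]
    _ = (∫ z, |z| ∂gaussianReal 0 1) * ‖x‖ := by
        rw [h_law, integral_abs_gaussianReal, Real.coe_toNNReal _ (sq_nonneg _),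
          Real.sqrt_sq (norm_nonneg x), mul_comm]

end Gaussian

section Projections

variable {E : Type*} [NormedAddCommGroup E] [InnerProductSpace ℝ E] [MeasurableSpace E]
  [BorelSpace E]

/-- The law of `⟪g, X⟫` for `X ∼ μ`. -/
noncomputable def projLaw (μ : Measure E) (g : E) : Measure ℝ := μ.map (innerSL ℝ g)

instance isProbabilityMeasure_projLaw (μ : Measure E) [IsProbabilityMeasure μ] (g : E) :
    IsProbabilityMeasure (projLaw μ g) :=
  Measure.isProbabilityMeasure_map (by fun_prop)

lemma integrable_norm_projLaw {μ : Measure E} (hμ : Integrable (fun x ↦ ‖x‖) μ) (g : E) :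
    Integrable (fun t ↦ ‖t‖) (projLaw μ g) := by
  rw [projLaw, integrable_map_measure (by fun_prop) (by fun_prop)]
  refine (hμ.const_mul ‖g‖).mono' (by fun_prop) (ae_of_all _ fun x ↦ ?_)
  simpa using abs_real_inner_le_norm g x

lemma charFun_eq_charFun_projLaw_one (μ : Measure E) (g : E) :
    charFun μ g = charFun (projLaw μ g) 1 := by
  rw [projLaw, charFun_map_eq_charFunDual_smul, one_smul, charFun_eq_charFunDual_toDualMap]
  rfl

lemma eq_of_ae_projLaw_eq [CompleteSpace E] [SecondCountableTopology E] {γ : Measure E}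
    [γ.IsOpenPosMeasure] {μ ν : Measure E} [IsFiniteMeasure μ] [IsFiniteMeasure ν]
    (h : ∀ᵐ g ∂γ, projLaw μ g = projLaw ν g) : μ = ν := by
  refine Measure.ext_of_charFun (Measure.eq_of_ae_eq (μ := γ) ?_
    continuous_charFun continuous_charFun)
  filter_upwards [h] with g hg
  rw [charFun_eq_charFun_projLaw_one μ, charFun_eq_charFun_projLaw_one ν, hg]

lemma meanDist_projLaw (μ ν : Measure E) [SFinite μ] [SFinite ν] (g : E) :
    meanDist (projLaw μ g) (projLaw ν g) = ∫ p, |inner ℝ g (p.1 - p.2)| ∂μ.prod ν := by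
  rw [meanDist, projLaw, projLaw, Measure.map_prod_map _ _ (by fun_prop) (by fun_prop),
    integral_map (by fun_prop) (by fun_prop)]
  simp only [Prod.map_fst, Prod.map_snd, innerSL_apply_apply, inner_sub_right, Real.norm_eq_abs]

section FiniteMeasure

variable [FiniteDimensional ℝ E] {μ ν : Measure E} [IsFiniteMeasure μ] [IsFiniteMeasure ν]

lemma integrable_abs_inner_sub_prod_stdGaussian
    (hμ : Integrable (fun x ↦ ‖x‖) μ) (hν : Integrable (fun x ↦ ‖x‖) ν) :
    Integrable (fun q : (E × E) × E ↦ |inner ℝ q.2 (q.1.1 - q.1.2)|)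
      ((μ.prod ν).prod (stdGaussian E)) := by
  refine integrable_prod_of_nonneg (by fun_prop) (fun _ ↦ abs_nonneg _)
    (fun p ↦ integrable_abs_inner_stdGaussian (p.1 - p.2)) ?_
  simpa only [integral_abs_inner_stdGaussian] using (integrable_norm_sub_prod hμ hν).const_mul _

lemma integrable_meanDist_projLaw
    (hμ : Integrable (fun x ↦ ‖x‖) μ) (hν : Integrable (fun x ↦ ‖x‖) ν) :
    Integrable (fun g ↦ meanDist (projLaw μ g) (projLaw ν g)) (stdGaussian E) := by
  simpa only [meanDist_projLaw] using
    (integrable_abs_inner_sub_prod_stdGaussian hμ hν).integral_prod_right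

lemma integral_meanDist_projLaw
    (hμ : Integrable (fun x ↦ ‖x‖) μ) (hν : Integrable (fun x ↦ ‖x‖) ν) :
    ∫ g, meanDist (projLaw μ g) (projLaw ν g) ∂stdGaussian E =
      (∫ z, |z| ∂gaussianReal 0 1) * meanDist μ ν := by
  simp_rw [meanDist_projLaw, meanDist, ← integral_const_mul, ← integral_abs_inner_stdGaussian]
  exact (integral_integral_swap (integrable_abs_inner_sub_prod_stdGaussian hμ hν)).symm

lemma integrable_energyDist_projLaw
    (hμ : Integrable (fun x ↦ ‖x‖) μ) (hν : Integrable (fun x ↦ ‖x‖) ν) :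
    Integrable (fun g ↦ energyDist (projLaw μ g) (projLaw ν g)) (stdGaussian E) :=
  (((integrable_meanDist_projLaw hμ hν).const_mul 2).sub
    (integrable_meanDist_projLaw hμ hμ)).sub (integrable_meanDist_projLaw hν hν)

lemma integral_energyDist_projLaw
    (hμ : Integrable (fun x ↦ ‖x‖) μ) (hν : Integrable (fun x ↦ ‖x‖) ν) :
    ∫ g, energyDist (projLaw μ g) (projLaw ν g) ∂stdGaussian E =
      (∫ z, |z| ∂gaussianReal 0 1) * energyDist μ ν := by
  simp only [energyDist]
  rw [integral_two_mul_sub_sub (integrable_meanDist_projLaw hμ hν)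
      (integrable_meanDist_projLaw hμ hμ) (integrable_meanDist_projLaw hν hν),
    integral_meanDist_projLaw hμ hν, integral_meanDist_projLaw hμ hμ,
    integral_meanDist_projLaw hν hν]
  ring

end FiniteMeasure

variable [FiniteDimensional ℝ E] {μ ν : Measure E} [IsProbabilityMeasure μ]
  [IsProbabilityMeasure ν]

theorem energyDist_eq_zero_iff
    (hμ : Integrable (fun x ↦ ‖x‖) μ) (hν : Integrable (fun x ↦ ‖x‖) ν) :
    energyDist μ ν = 0 ↔ μ = ν := by
  refine ⟨fun h ↦ eq_of_ae_projLaw_eq (γ := stdGaussian E) ?_, ?_⟩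
  · have hμg := integrable_norm_projLaw hμ
    have hνg := integrable_norm_projLaw hν
    have h_integral : ∫ g, energyDist (projLaw μ g) (projLaw ν g) ∂stdGaussian E = 0 := by
      rw [integral_energyDist_projLaw hμ hν, h, mul_zero]
    have h_ae := (integral_eq_zero_iff_of_nonneg
      (fun g ↦ energyDist_nonneg_of_real (hμg g) (hνg g))
      (integrable_energyDist_projLaw hμ hν)).1 h_integral
    filter_upwards [h_ae] with g hg
    exact eq_of_energyDist_eq_zero_of_real (hμg g) (hνg g) hg
  · rintro rfl
    rw [energyDist]
    ring

theorem statement0_general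
    (hμ : Integrable (fun x ↦ ‖x‖) μ) (hν : Integrable (fun x ↦ ‖x‖) ν) :
    (meanDist μ ν - meanDist μ μ) ^ 2 + (meanDist μ ν - meanDist ν ν) ^ 2 = 0 ↔ μ = ν := by
  refine ⟨fun h ↦ (energyDist_eq_zero_iff hμ hν).1 ?_, ?_⟩
  · obtain ⟨h₁, h₂⟩ := (add_eq_zero_iff_of_nonneg (sq_nonneg _) (sq_nonneg _)).1 h
    rw [energyDist]
    linarith [pow_eq_zero_iff two_ne_zero |>.1 h₁, pow_eq_zero_iff two_ne_zero |>.1 h₂]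
  · rintro rfl
    simp

end Projections

/-- For probability distributions `F₁, F₂` on `ℝ^d` with finite first
moments, writing `E‖X−Y‖` for the expected Euclidean distance between independent
`X ∼ F₁` and `Y ∼ F₂` (an integral against the product measure), the divergence
`D(F₁,F₂) = (E‖X₁−Y₁‖ − E‖X₁−X₂‖)² + (E‖X₁−Y₁‖ − E‖Y₁−Y₂‖)²`
vanishes if and only if `F₁ = F₂`. -/
theorem statement0 (d : ℕ) (hd : 1 ≤ d)
    (F₁ F₂ : Measure (EuclideanSpace ℝ (Fin d)))
    [IsProbabilityMeasure F₁] [IsProbabilityMeasure F₂]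
    (h₁ : Integrable (fun x => ‖x‖) F₁)
    (h₂ : Integrable (fun y => ‖y‖) F₂) :
    ((∫ p, ‖p.1 - p.2‖ ∂(F₁.prod F₂)) - (∫ p, ‖p.1 - p.2‖ ∂(F₁.prod F₁))) ^ 2 +
      ((∫ p, ‖p.1 - p.2‖ ∂(F₁.prod F₂)) - (∫ p, ‖p.1 - p.2‖ ∂(F₂.prod F₂))) ^ 2 = 0 ↔
    F₁ = F₂ :=
  statement0_general h₁ h₂
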